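/- Let α, β be real numbers with α > -1/2 and β ≥ 0, let δ > 0 be real, let n ∈ ℕ (n ≥ 0), and let t ∈ (0, π]. If F_n^{(α,β),δ}(t) ≥ 0 and F_{n+1}^{(α,β),δ}(t) ≥ 0, then F_n^{(α,β+1),δ}(t) ≥ 0. Moreover, if F_n^{(α,β),δ}(t) > 0 and F_{n+1}^{(α,β),δ}(t) > 0, then F_n^{(α,β+1),δ}(t) > 0. -/

import Mathlib

open MeasureTheory Real Set

/-- Generalized binomial coefficient `C(u, v) = Γ(u+1) / (Γ(v+1) Γ(u-v+1))`. -/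
noncomputable def genBinom (u v : ℝ) : ℝ :=
  Real.Gamma (u + 1) / (Real.Gamma (v + 1) * Real.Gamma (u - v + 1))

/-- Jacobi polynomial `P_n^{(a,b)}(x)`. -/
noncomputable def jacobiP (n : ℕ) (a b x : ℝ) : ℝ :=
  ∑ k ∈ Finset.range (n + 1),
    genBinom ((n : ℝ) + a) ((n : ℝ) - (k : ℝ)) * genBinom ((n : ℝ) + b) (k : ℝ) *
      ((x - 1) / 2) ^ k * ((x + 1) / 2) ^ (n - k)

/-- `F_n^{(α,β),δ}(t)`. -/
noncomputable def FJ (n : ℕ) (α β δ t : ℝ) : ℝ :=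
  ∫ θ in (0:ℝ)..t, (t - θ) ^ δ * jacobiP n (α - 1/2) (β - 1/2) (Real.cos θ) *
    (Real.sin (θ / 2)) ^ (2 * α) * (Real.cos (θ / 2)) ^ (2 * β)

/-!
The Jacobi polynomials satisfy a contiguous relation writing `(1 + x) / 2 * P_n^{(a,b+1)}(x)` as a
combination of `P_{n+1}^{(a,b)}(x)` and `P_n^{(a,b)}(x)` with nonnegative coefficients. At
`x = cos θ` the factor `(1 + x) / 2 = cos² (θ / 2)` is exactly what raises the exponent of
`cos (θ / 2)` from `2β` to `2(β + 1)`, so integrating the relation writes a positive multiple of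
`F_n^{(α,β+1)}` as a nonnegative combination of `F_{n+1}^{(α,β)}` and `F_n^{(α,β)}`.
-/

section GenBinom

-- Mathlib sets `Γ 0 = 0`, so division by zero yields the conventional value of `C(u, -1)`.
lemma genBinom_neg_one_right (u : ℝ) : genBinom u (-1) = 0 := by
  simp [genBinom]

lemma genBinom_symm (u v : ℝ) : genBinom u (u - v) = genBinom u v := by
  unfold genBinom
  rw [sub_sub_cancel, mul_comm]

lemma add_one_mul_genBinom_add_one {u : ℝ} (hu : u + 1 ≠ 0) (v : ℝ) :
    (v + 1) * genBinom (u + 1) (v + 1) = (u + 1) * genBinom u v := by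
  rcases eq_or_ne v (-1) with rfl | hv
  · simp [genBinom_neg_one_right]
  · have hv' : v + 1 ≠ 0 := fun h => hv (eq_neg_of_add_eq_zero_left h)
    unfold genBinom
    rw [Real.Gamma_add_one hu, Real.Gamma_add_one hv', add_sub_add_right_eq_sub]
    field_simp

lemma sub_mul_genBinom_add_one_left {u : ℝ} (hu : u + 1 ≠ 0) (v : ℝ) :
    (u + 1 - v) * genBinom (u + 1) v = (u + 1) * genBinom u v := by
  have h := add_one_mul_genBinom_add_one hu (u - v)
  rwa [sub_add_eq_add_sub, genBinom_symm, genBinom_symm] at h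

lemma genBinom_add_one_add_one {u : ℝ} (hu : u + 1 ≠ 0) (v : ℝ) :
    genBinom (u + 1) (v + 1) = genBinom u v + genBinom u (v + 1) := by
  refine mul_left_cancel₀ hu ?_
  linear_combination
    add_one_mul_genBinom_add_one hu v + sub_mul_genBinom_add_one_left hu (v + 1)

end GenBinom

section JacobiPolynomial

/-- The coefficient `C(n+a, n-k) C(n+b, k)` of `((x-1)/2)^k ((x+1)/2)^(n-k)` in `P_n^{(a,b)}(x)`.
The indices `n` and `k` are real so that `k` may take the boundary values `-1` and `n + 1`, at which
the coefficient vanishes. -/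
noncomputable def jacobiCoeff (n a b k : ℝ) : ℝ :=
  genBinom (n + a) (n - k) * genBinom (n + b) k

lemma jacobiCoeff_neg_one (n a b : ℝ) : jacobiCoeff n a b (-1) = 0 := by
  simp [jacobiCoeff, genBinom_neg_one_right]

lemma jacobiCoeff_add_one_self (n a b : ℝ) : jacobiCoeff n a b (n + 1) = 0 := by
  simp [jacobiCoeff, genBinom_neg_one_right]

lemma jacobiCoeff_add_one_left {n a b : ℝ} (ha : n + a + 1 ≠ 0) (hb : n + b + 1 ≠ 0) (k : ℝ) :
    (n + 1) * jacobiCoeff (n + 1) a b k =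
      (2 * n + a + b + 2) * jacobiCoeff n a (b + 1) k - (n + b + 1) * jacobiCoeff n a b k
        + (n + b + 1) * jacobiCoeff n a b (k - 1) := by
  have pascal := genBinom_add_one_add_one ha (n - k)
  have absorb_a := add_one_mul_genBinom_add_one ha (n - k)
  have absorb_b := add_one_mul_genBinom_add_one hb (k - 1)
  have lower_b := sub_mul_genBinom_add_one_left hb k
  rw [sub_add_cancel] at absorb_b
  unfold jacobiCoeff
  rw [add_right_comm n 1 a, add_right_comm n 1 b, ← add_assoc n b 1,
    show n + 1 - k = n - k + 1 by ring, show n - (k - 1) = n - k + 1 by ring]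
  linear_combination genBinom (n + b + 1) k * (absorb_a + k * pascal)
    - genBinom (n + a) (n - k) * lower_b + genBinom (n + a) (n - k + 1) * absorb_b

lemma jacobiP_eq_sum_jacobiCoeff (n : ℕ) (a b x : ℝ) :
    jacobiP n a b x = ∑ k ∈ Finset.range (n + 1),
      jacobiCoeff n a b k * (((x - 1) / 2) ^ k * ((x + 1) / 2) ^ (n - k)) := by
  simp only [jacobiP, jacobiCoeff, mul_assoc]

lemma add_one_div_two_mul_jacobiP (n : ℕ) (a b x : ℝ) :
    (x + 1) / 2 * jacobiP n a b x = ∑ k ∈ Finset.range (n + 2),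
      jacobiCoeff n a b k * (((x - 1) / 2) ^ k * ((x + 1) / 2) ^ (n + 1 - k)) := by
  rw [Finset.sum_range_succ, Nat.cast_add_one, jacobiCoeff_add_one_self, zero_mul, add_zero,
    jacobiP_eq_sum_jacobiCoeff, Finset.mul_sum]
  refine Finset.sum_congr rfl fun k hk => ?_
  rw [Nat.sub_add_comm (Finset.mem_range_succ_iff.mp hk), pow_succ]
  ring

lemma sub_one_div_two_mul_jacobiP (n : ℕ) (a b x : ℝ) :
    (x - 1) / 2 * jacobiP n a b x = ∑ k ∈ Finset.range (n + 2),
      jacobiCoeff n a b (k - 1) * (((x - 1) / 2) ^ k * ((x + 1) / 2) ^ (n + 1 - k)) := by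
  rw [Finset.sum_range_succ', Nat.cast_zero, zero_sub, jacobiCoeff_neg_one, zero_mul, add_zero,
    jacobiP_eq_sum_jacobiCoeff, Finset.mul_sum]
  refine Finset.sum_congr rfl fun k _ => ?_
  rw [Nat.cast_add_one, add_sub_cancel_right, Nat.add_sub_add_right, pow_succ]
  ring

lemma jacobiP_contiguous_right {n : ℕ} {a b : ℝ} (ha : n + a + 1 ≠ 0) (hb : n + b + 1 ≠ 0)
    (x : ℝ) :
    (2 * n + a + b + 2) * ((x + 1) / 2 * jacobiP n a (b + 1) x) =
      (n + 1) * jacobiP (n + 1) a b x + (n + b + 1) * jacobiP n a b x := by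
  have expand : (n + 1) * jacobiP (n + 1) a b x =
      (2 * n + a + b + 2) * ((x + 1) / 2 * jacobiP n a (b + 1) x)
        - (n + b + 1) * ((x + 1) / 2 * jacobiP n a b x)
        + (n + b + 1) * ((x - 1) / 2 * jacobiP n a b x) := by
    simp only [add_one_div_two_mul_jacobiP, sub_one_div_two_mul_jacobiP,
      jacobiP_eq_sum_jacobiCoeff (n + 1), Finset.mul_sum, ← Finset.sum_sub_distrib,
      ← Finset.sum_add_distrib]
    refine Finset.sum_congr rfl fun k _ => ?_
    rw [Nat.cast_add_one]
    linear_combination (((x - 1) / 2) ^ k * ((x + 1) / 2) ^ (n + 1 - k)) *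
      jacobiCoeff_add_one_left ha hb k
  linear_combination -expand

lemma continuous_jacobiP (n : ℕ) (a b : ℝ) : Continuous (jacobiP n a b) := by
  unfold jacobiP
  fun_prop

end JacobiPolynomial

section Integrability

lemma intervalIntegrable_mul_of_continuousOn {A : Type*} [NormedRing A] {μ : Measure ℝ}
    {f g : ℝ → A} {a b c : ℝ} (hf : IntervalIntegrable f μ a b) (hg : IntervalIntegrable g μ b c)
    (hf' : ContinuousOn f (uIcc b c)) (hg' : ContinuousOn g (uIcc a b)) :
    IntervalIntegrable (fun x => f x * g x) μ a c :=
  (hf.mul_continuousOn hg').trans (hg.continuousOn_mul hf')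

lemma sinc_pos_of_nonneg_of_lt_pi {x : ℝ} (hx0 : 0 ≤ x) (hxπ : x < π) : 0 < sinc x := by
  rcases hx0.eq_or_lt with rfl | hx
  · simp
  · rw [sinc_of_ne_zero hx.ne']
    exact div_pos (sin_pos_of_pos_of_lt_pi hx hxπ) hx

lemma mul_sinc (x : ℝ) : x * sinc x = sin x := by
  rcases eq_or_ne x 0 with rfl | hx
  · simp
  · rw [sinc_of_ne_zero hx, mul_div_cancel₀ _ hx]

lemma intervalIntegrable_rpow_mul_sin_half_rpow {p r t : ℝ} (hpr : -1 < r + p) (ht0 : 0 ≤ t)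
    (ht : t < 2 * π) :
    IntervalIntegrable (fun θ => θ ^ r * sin (θ / 2) ^ p) volume 0 t := by
  have sinc_pos : ∀ θ ∈ Icc 0 t, 0 < sinc (θ / 2) / 2 := fun θ hθ =>
    half_pos (sinc_pos_of_nonneg_of_lt_pi (by linarith [hθ.1]) (by linarith [hθ.2]))
  have sinc_cont : ContinuousOn (fun θ => (sinc (θ / 2) / 2) ^ p) (uIcc 0 t) := by
    rw [uIcc_of_le ht0]
    exact ContinuousOn.rpow_const (by fun_prop) fun θ hθ => Or.inl (sinc_pos θ hθ).ne'
  refine ((intervalIntegral.intervalIntegrable_rpow' hpr).mul_continuousOn sinc_cont).congr_uIoo ?_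
  intro θ hθ
  rw [uIoo_of_le ht0] at hθ
  have sin_eq : sin (θ / 2) = θ * (sinc (θ / 2) / 2) := by
    rw [← mul_sinc]
    ring
  simp only [sin_eq, mul_rpow hθ.1.le (sinc_pos θ (Ioo_subset_Icc_self hθ)).le, rpow_add hθ.1,
    mul_assoc]

lemma continuousOn_cos_half_rpow (q : ℝ) :
    ContinuousOn (fun θ => cos (θ / 2) ^ q) (Ico 0 π) :=
  ContinuousOn.rpow_const (by fun_prop) fun θ hθ => Or.inl
    (cos_pos_of_mem_Ioo ⟨by linarith [hθ.1, pi_pos], by linarith [hθ.2]⟩).ne'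

lemma intervalIntegrable_sub_rpow_mul_cos_half_rpow {q δ t : ℝ} (hδ : -1 < δ)
    (ht : t ∈ Ioc 0 π) (htπ : t = π → -1 < δ + q) :
    IntervalIntegrable (fun θ => (t - θ) ^ δ * cos (θ / 2) ^ q) volume 0 t := by
  rcases ht.2.lt_or_eq with hlt | rfl
  · have sub_int : IntervalIntegrable (fun θ => (t - θ) ^ δ) volume 0 t := by
      simpa using ((intervalIntegral.intervalIntegrable_rpow' hδ).comp_sub_left t :
        IntervalIntegrable _ volume (t - t) (t - 0))
    refine sub_int.mul_continuousOn ((continuousOn_cos_half_rpow q).mono ?_)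
    rw [uIcc_of_le ht.1.le]
    exact Icc_subset_Ico_right hlt
  · -- At `t = π` both factors degenerate at the same endpoint, which `θ ↦ π - θ` moves to `0`.
    have reflected := (intervalIntegrable_rpow_mul_sin_half_rpow (htπ rfl) pi_pos.le
      (by linarith [pi_pos])).symm.comp_sub_left π
    simpa [sub_div, sin_pi_div_two_sub] using reflected

lemma intervalIntegrable_sub_rpow_mul_sin_half_rpow_mul_cos_half_rpow {p q δ t : ℝ} (hp : -1 < p)
    (hδ : -1 < δ) (ht : t ∈ Ioc 0 π) (htπ : t = π → -1 < δ + q) :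
    IntervalIntegrable (fun θ => sin (θ / 2) ^ p * ((t - θ) ^ δ * cos (θ / 2) ^ q))
      volume 0 t := by
  obtain ⟨ht0, ht'⟩ := ht
  have sin_int : IntervalIntegrable (fun θ => sin (θ / 2) ^ p) volume 0 (t / 2) := by
    simpa using intervalIntegrable_rpow_mul_sin_half_rpow (p := p) (r := 0) (t := t / 2)
      (by linarith) (by linarith) (by linarith)
  have cos_int : IntervalIntegrable (fun θ => (t - θ) ^ δ * cos (θ / 2) ^ q) volume (t / 2) t :=
    (intervalIntegrable_sub_rpow_mul_cos_half_rpow hδ ⟨ht0, ht'⟩ htπ).mono_set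
      (uIcc_subset_uIcc_right (by rw [uIcc_of_le ht0.le]; constructor <;> linarith))
  refine intervalIntegrable_mul_of_continuousOn sin_int cos_int ?_ ?_
  · rw [uIcc_of_le (by linarith)]
    exact ContinuousOn.rpow_const (by fun_prop) fun θ hθ => Or.inl
      (sin_pos_of_pos_of_lt_pi (by linarith [hθ.1]) (by linarith [hθ.2])).ne'
  · rw [uIcc_of_le (by linarith)]
    refine ContinuousOn.mul (ContinuousOn.rpow_const (by fun_prop) fun θ hθ => Or.inl ?_)
      ((continuousOn_cos_half_rpow q).mono (Icc_subset_Ico_right (by linarith)))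
    linarith [hθ.2]

end Integrability

section Recurrence

variable {α β δ t : ℝ}

lemma intervalIntegrable_FJ_integrand (hα : -1 / 2 < α) (hδ : -1 < δ) (ht : t ∈ Ioc 0 π)
    (htπ : t = π → -1 < δ + 2 * β) (n : ℕ) (a b : ℝ) :
    IntervalIntegrable (fun θ => (t - θ) ^ δ * jacobiP n a b (cos θ) *
      sin (θ / 2) ^ (2 * α) * cos (θ / 2) ^ (2 * β)) volume 0 t := by
  have weight_int := intervalIntegrable_sub_rpow_mul_sin_half_rpow_mul_cos_half_rpow
    (p := 2 * α) (by linarith) hδ ht htπ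
  refine (weight_int.mul_continuousOn
    ((continuous_jacobiP n a b).comp continuous_cos).continuousOn).congr fun θ _ => ?_
  simp only [Function.comp_apply]
  ring

lemma cos_half_rpow_two_mul_add_one (hβ : β + 1 ≠ 0) {θ : ℝ} (hθ : 0 ≤ cos (θ / 2)) :
    cos (θ / 2) ^ (2 * (β + 1)) = (cos θ + 1) / 2 * cos (θ / 2) ^ (2 * β) := by
  have half_angle : cos (θ / 2) ^ 2 = (cos θ + 1) / 2 := by
    rw [cos_sq, mul_div_cancel₀ θ two_ne_zero]
    ring
  rw [mul_add_one, rpow_add' hθ (by rw [← mul_add_one]; exact mul_ne_zero two_ne_zero hβ),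
    rpow_two, half_angle, mul_comm]

lemma FJ_contiguous_right (hα : -1 / 2 < α) (hβ : -1 / 2 < β) (hδ : -1 < δ) (ht : t ∈ Ioc 0 π)
    (htπ : t = π → -1 < δ + 2 * β) (n : ℕ) :
    (2 * n + α + β + 1) * FJ n α (β + 1) δ t =
      (n + 1) * FJ (n + 1) α β δ t + (n + β + 1 / 2) * FJ n α β δ t := by
  have hn : (0 : ℝ) ≤ n := n.cast_nonneg
  have integrable := fun m =>
    intervalIntegrable_FJ_integrand hα hδ ht htπ m (α - 1 / 2) (β - 1 / 2)
  unfold FJ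
  simp only [← intervalIntegral.integral_const_mul]
  rw [← intervalIntegral.integral_add ((integrable (n + 1)).const_mul _)
    ((integrable n).const_mul _)]
  refine intervalIntegral.integral_congr fun θ hθ => ?_
  rw [uIcc_of_le ht.1.le] at hθ
  have cos_nonneg : 0 ≤ cos (θ / 2) :=
    cos_nonneg_of_mem_Icc ⟨by linarith [hθ.1, pi_pos], by linarith [hθ.2, ht.2]⟩
  have contiguous := jacobiP_contiguous_right (n := n) (a := α - 1 / 2) (b := β - 1 / 2)
    (by linarith [hn]) (by linarith [hn]) (cos θ)
  rw [sub_add_eq_add_sub] at contiguous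
  simp only [cos_half_rpow_two_mul_add_one (by linarith : β + 1 ≠ 0) cos_nonneg]
  linear_combination
    ((t - θ) ^ δ * sin (θ / 2) ^ (2 * α) * cos (θ / 2) ^ (2 * β)) * contiguous

end Recurrence

theorem FJ_beta_step_nonneg_general (α β : ℝ) (hα : -1 / 2 < α) (hβ : -1 / 2 < β) (δ : ℝ)
    (hδ : -1 < δ) (n : ℕ) (t : ℝ) (ht : t ∈ Set.Ioc (0 : ℝ) π) (htπ : t = π → -1 < δ + 2 * β) :
    (0 ≤ FJ n α β δ t → 0 ≤ FJ (n + 1) α β δ t → 0 ≤ FJ n α (β + 1) δ t) ∧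
      (0 < FJ n α β δ t → 0 < FJ (n + 1) α β δ t → 0 < FJ n α (β + 1) δ t) := by
  have contiguous := FJ_contiguous_right hα hβ hδ ht htπ n
  have hn : (0 : ℝ) ≤ n := n.cast_nonneg
  have lhs_coeff_pos : 0 < 2 * n + α + β + 1 := by linarith [hn]
  have rhs_coeff_pos : 0 < n + β + 1 / 2 := by linarith [hn]
  constructor
  · intro h₀ h₁
    exact nonneg_of_mul_nonneg_right (contiguous ▸ by positivity) lhs_coeff_pos
  · intro h₀ h₁
    exact pos_of_mul_pos_right (contiguous ▸ by positivity) lhs_coeff_pos.le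

theorem FJ_beta_step_nonneg (α β : ℝ) (hα : -1/2 < α) (hβ : 0 ≤ β) (δ : ℝ)
    (hδ : 0 < δ) (n : ℕ) (t : ℝ) (ht : t ∈ Set.Ioc (0:ℝ) π) :
    ((0 ≤ FJ n α β δ t → 0 ≤ FJ (n + 1) α β δ t → 0 ≤ FJ n α (β + 1) δ t) ∧
     (0 < FJ n α β δ t → 0 < FJ (n + 1) α β δ t → 0 < FJ n α (β + 1) δ t)) :=
  FJ_beta_step_nonneg_general α β hα (by linarith) δ (by linarith) n t ht fun _ => by linarith
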